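/- Let d ≥ 3 and let B : ℝ^d → ℝ^{d×d} be a smooth compactly supported map with skew-symmetric values satisfying the closedness condition ∂_j B_{kl} + ∂_k B_{lj} + ∂_l B_{jk} = 0. Let A be the Poincaré-gauge potential A_j(x) := ∫_0^1 (∑_l x_l B_{lj}(u x)) u du, for s ≥ 0 set A_s(y) := e^{s/2} A(e^{s/2} y), and let λ_B(s) be the infimum over nonzero ψ ∈ C_c^∞(ℝ^d, ℂ) of ( ∫_{ℝ^d} |∇ψ(y) − iA_s(y)ψ(y)|² dy − ((d−2)/2)² ∫ |ψ(y)|²/|y|² dy + (1/16) ∫ |y|² |ψ(y)|² dy ) / ∫ |ψ|² dy. Then λ_B(s) → 1/2 as s → ∞. -/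

import Mathlib

open MeasureTheory Real Filter

/-- The Poincaré-gauge vector potential `A_j(x) := ∫_0^1 (∑_l x_l B_{lj}(u x)) u du`. -/
noncomputable def poincareGauge (d : ℕ)
    (B : EuclideanSpace ℝ (Fin d) → Fin d → Fin d → ℝ)
    (x : EuclideanSpace ℝ (Fin d)) (j : Fin d) : ℝ :=
  ∫ u in (0:ℝ)..1, (∑ l, x l * B (u • x) l j) * u

/-- The quadratic form `l_s[ψ]` of the operator `(−i∇ − A_s)² − c_d/|y|² + |y|²/16`
with the singularly scaled potential `A_s(y) := e^{s/2} A(e^{s/2} y)`. -/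
noncomputable def lsFormP (d : ℕ)
    (A : EuclideanSpace ℝ (Fin d) → Fin d → ℝ) (s : ℝ)
    (ψ : EuclideanSpace ℝ (Fin d) → ℂ) : ℝ :=
  (∫ y, ∑ j, ‖fderiv ℝ ψ y (EuclideanSpace.single j (1:ℝ))
      - Complex.I * (Real.exp (s/2) * A (Real.exp (s/2) • y) j : ℝ) * ψ y‖ ^ 2)
  - ((d - 2 : ℝ)/2)^2 * (∫ y, ‖ψ y‖^2 / ‖y‖^2)
  + (1/16 : ℝ) * ∫ y, ‖y‖^2 * ‖ψ y‖^2

/-- The lowest eigenvalue `λ_B(s)` of the singularly scaled operator `L_s`,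
as the infimum of the Rayleigh quotient. -/
noncomputable def lambdaB (d : ℕ)
    (A : EuclideanSpace ℝ (Fin d) → Fin d → ℝ) (s : ℝ) : ℝ :=
  sInf {q : ℝ | ∃ ψ : EuclideanSpace ℝ (Fin d) → ℂ,
    ContDiff ℝ (⊤ : ℕ∞) ψ ∧ HasCompactSupport ψ ∧ ψ ≠ 0 ∧
    q = lsFormP d A s ψ / ∫ y, ‖ψ y‖^2}

section ParametricIntegral

variable {E : Type*} [NormedAddCommGroup E] [NormedSpace ℝ E] [FiniteDimensional ℝ E]

lemma hasFDerivAt_intervalIntegral_of_contDiff {G : Type*} [NormedAddCommGroup G] [NormedSpace ℝ G]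
    [CompleteSpace G] {F : E × ℝ → G} (hF : ContDiff ℝ 1 F) (a b : ℝ) (x : E) :
    HasFDerivAt (fun x => ∫ u in a..b, F (x, u))
      (∫ u in a..b, (fderiv ℝ F (x, u)).comp (ContinuousLinearMap.inl ℝ E ℝ)) x := by
  have hF' : Continuous fun p : E × ℝ =>
      (fderiv ℝ F p).comp (ContinuousLinearMap.inl ℝ E ℝ) :=
    (hF.continuous_fderiv one_ne_zero).clm_comp continuous_const
  obtain ⟨C, hC⟩ := ((isCompact_closedBall x 1).prod (isCompact_uIcc (a := a) (b := b))
    ).exists_bound_of_continuousOn hF'.continuousOn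
  refine intervalIntegral.hasFDerivAt_integral_of_dominated_of_fderiv_le (𝕜 := ℝ)
    (F := fun x u => F (x, u)) (bound := fun _ => C)
    (F' := fun x u => (fderiv ℝ F (x, u)).comp (ContinuousLinearMap.inl ℝ E ℝ))
    (Metric.closedBall_mem_nhds x one_pos) ?_ ?_ ?_ ?_ ?_ ?_
  · exact Eventually.of_forall fun y =>
      (hF.continuous.comp (Continuous.prodMk_right y)).aestronglyMeasurable
  · exact (hF.continuous.comp (Continuous.prodMk_right x)).intervalIntegrable _ _
  · exact (hF'.comp (Continuous.prodMk_right x)).aestronglyMeasurable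
  · exact Eventually.of_forall fun u hu y hy => hC (y, u) ⟨hy, Set.uIoc_subset_uIcc hu⟩
  · exact intervalIntegrable_const
  · refine Eventually.of_forall fun u _ y _ => ?_
    have h1 : HasFDerivAt F (fderiv ℝ F (y, u)) (y, u) :=
      (hF.differentiable one_ne_zero _).hasFDerivAt
    exact h1.comp y (hasFDerivAt_prodMk_left y u)

end ParametricIntegral

lemma contDiff_nat_intervalIntegral {E : Type} [NormedAddCommGroup E] [NormedSpace ℝ E]
    [FiniteDimensional ℝ E] (a b : ℝ) (n : ℕ) :
    ∀ {G : Type} [NormedAddCommGroup G] [NormedSpace ℝ G] [CompleteSpace G] {F : E × ℝ → G},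
      ContDiff ℝ n F → ContDiff ℝ n fun x => ∫ u in a..b, F (x, u) := by
  induction n with
  | zero =>
    intro G _ _ _ F hF
    simp only [CharP.cast_eq_zero, contDiff_zero] at hF ⊢
    exact intervalIntegral.continuous_parametric_intervalIntegral_of_continuous'
      (f := fun x u => F (x, u)) hF a b
  | succ n ih =>
    intro G _ _ _ F hF
    have h1 : ContDiff ℝ 1 F := hF.of_le (by exact_mod_cast Nat.le_add_left 1 n)
    have hd := hasFDerivAt_intervalIntegral_of_contDiff h1 a b
    push_cast at hF ⊢
    rw [contDiff_succ_iff_fderiv] at hF ⊢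
    refine ⟨fun x => (hd x).differentiableAt, fun h => by simp at h, ?_⟩
    rw [funext fun x => (hd x).fderiv]
    exact ih (F := fun p => (fderiv ℝ F p).comp (ContinuousLinearMap.inl ℝ E ℝ))
      (hF.2.2.clm_comp contDiff_const)

lemma contDiff_top_intervalIntegral {E G : Type} [NormedAddCommGroup E] [NormedSpace ℝ E]
    [FiniteDimensional ℝ E] [NormedAddCommGroup G] [NormedSpace ℝ G] [CompleteSpace G]
    {F : E × ℝ → G} (hF : ContDiff ℝ (⊤ : ℕ∞) F) (a b : ℝ) :
    ContDiff ℝ (⊤ : ℕ∞) fun x => ∫ u in a..b, F (x, u) := by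
  rw [contDiff_infty] at hF ⊢
  exact fun n => contDiff_nat_intervalIntegral a b n (hF n)

section PoincareGauge

variable {d : ℕ} {B : EuclideanSpace ℝ (Fin d) → Fin d → Fin d → ℝ}

lemma contDiff_poincareGauge_integrand (hB : ∀ j k, ContDiff ℝ (⊤ : ℕ∞) fun x => B x j k)
    (j : Fin d) :
    ContDiff ℝ (⊤ : ℕ∞) fun p : EuclideanSpace ℝ (Fin d) × ℝ =>
      (∑ l, p.1 l * B (p.2 • p.1) l j) * p.2 := by
  refine ContDiff.mul (ContDiff.sum fun l _ => ContDiff.mul ?_ ?_) contDiff_snd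
  · exact (EuclideanSpace.proj (𝕜 := ℝ) l).contDiff.comp contDiff_fst
  · exact (hB l j).comp (contDiff_snd.smul contDiff_fst)

lemma contDiff_poincareGauge (hB : ∀ j k, ContDiff ℝ (⊤ : ℕ∞) fun x => B x j k) (j : Fin d) :
    ContDiff ℝ (⊤ : ℕ∞) fun x => poincareGauge d B x j :=
  contDiff_top_intervalIntegral (contDiff_poincareGauge_integrand hB j) 0 1

lemma EuclideanSpace.map_eq_sum_single {F : Type*} [NormedAddCommGroup F] [NormedSpace ℝ F]
    (L : EuclideanSpace ℝ (Fin d) →L[ℝ] F) (x : EuclideanSpace ℝ (Fin d)) :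
    L x = ∑ l, x l • L (EuclideanSpace.single l 1) := by
  conv_lhs => rw [← (EuclideanSpace.basisFun (Fin d) ℝ).sum_repr x]
  simp

lemma fderiv_poincareGauge_apply (hB : ∀ j k, ContDiff ℝ (⊤ : ℕ∞) fun x => B x j k)
    (j k : Fin d) (x : EuclideanSpace ℝ (Fin d)) :
    IntervalIntegrable (fun u : ℝ => (B (u • x) j k + u * ∑ l, x l *
        fderiv ℝ (fun y => B y l k) (u • x) (EuclideanSpace.single j (1 : ℝ))) * u) volume 0 1 ∧
    fderiv ℝ (fun x => poincareGauge d B x k) x (EuclideanSpace.single j (1 : ℝ)) =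
      ∫ u in (0 : ℝ)..1, (B (u • x) j k + u * ∑ l, x l *
        fderiv ℝ (fun y => B y l k) (u • x) (EuclideanSpace.single j (1 : ℝ))) * u := by
  have hF := (contDiff_poincareGauge_integrand hB k).of_le
    (show (1 : WithTop ℕ∞) ≤ (⊤ : ℕ∞) by exact_mod_cast le_top)
  have hd := hasFDerivAt_intervalIntegral_of_contDiff hF 0 1 x
  have hcont : Continuous fun u : ℝ => fderiv ℝ (fun p : EuclideanSpace ℝ (Fin d) × ℝ =>
      (∑ l, p.1 l * B (p.2 • p.1) l k) * p.2) (x, u) :=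
    (hF.continuous_fderiv one_ne_zero).comp (Continuous.prodMk_right x)
  have key : ∀ u : ℝ, fderiv ℝ (fun p : EuclideanSpace ℝ (Fin d) × ℝ =>
      (∑ l, p.1 l * B (p.2 • p.1) l k) * p.2) (x, u) (EuclideanSpace.single j 1, 0) =
      (B (u • x) j k + u * ∑ l, x l *
        fderiv ℝ (fun y => B y l k) (u • x) (EuclideanSpace.single j (1 : ℝ))) * u := by
    intro u
    have h1 := HasFDerivAt.comp (f := fun y : EuclideanSpace ℝ (Fin d) => (y, u)) x
      ((hF.differentiable one_ne_zero (x, u)).hasFDerivAt)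
      (hasFDerivAt_prodMk_left (𝕜 := ℝ) x u)
    have h2 : HasFDerivAt (fun y : EuclideanSpace ℝ (Fin d) => (∑ l, y l * B (u • y) l k) * u)
        (u • ∑ l, (x l • (fderiv ℝ (fun y => B y l k) (u • x)).comp
          (u • ContinuousLinearMap.id ℝ (EuclideanSpace ℝ (Fin d))) + B (u • x) l k •
          EuclideanSpace.proj (𝕜 := ℝ) l)) x := by
      refine HasFDerivAt.mul_const (𝕜 := ℝ)
        (HasFDerivAt.fun_sum fun l _ => HasFDerivAt.fun_mul (𝕜 := ℝ) ?_ ?_) u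
      · exact (EuclideanSpace.proj (𝕜 := ℝ) l).hasFDerivAt
      · have h3 : HasFDerivAt (fun y : EuclideanSpace ℝ (Fin d) => u • y)
          (u • ContinuousLinearMap.id ℝ (EuclideanSpace ℝ (Fin d))) x :=
          (hasFDerivAt_id x).const_smul u
        exact HasFDerivAt.comp (g := fun y => B y l k) x
          (((hB l k).differentiable (by simp) _).hasFDerivAt) h3
    have h3 := congrArg (fun L => L (EuclideanSpace.single j (1 : ℝ))) (h1.unique h2)
    simp only [ContinuousLinearMap.comp_apply, ContinuousLinearMap.inl_apply] at h3
    rw [h3]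
    simp [Finset.sum_add_distrib, Finset.mul_sum, ← Pi.single_apply]
    rw [add_mul, Finset.sum_mul, add_comm]
    congr 1
    · simp [Pi.single_apply, mul_comm]
    · exact Finset.sum_congr rfl fun i _ => by ring
  have happ : (fun u : ℝ => ((fderiv ℝ (fun p : EuclideanSpace ℝ (Fin d) × ℝ =>
      (∑ l, p.1 l * B (p.2 • p.1) l k) * p.2) (x, u)).comp
      (ContinuousLinearMap.inl ℝ (EuclideanSpace ℝ (Fin d)) ℝ)) (EuclideanSpace.single j 1)) =
      fun u : ℝ => (B (u • x) j k + u * ∑ l, x l *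
        fderiv ℝ (fun y => B y l k) (u • x) (EuclideanSpace.single j (1 : ℝ))) * u :=
    funext key
  have hInt := (hcont.clm_comp (continuous_const (y :=
    ContinuousLinearMap.inl ℝ (EuclideanSpace ℝ (Fin d)) ℝ))).intervalIntegrable
    (μ := volume) 0 1
  rw [← happ]
  refine ⟨((hcont.clm_comp continuous_const).clm_apply continuous_const).intervalIntegrable _ _, ?_⟩
  have h4 := hd.fderiv
  simp only [poincareGauge]
  rw [h4, ContinuousLinearMap.intervalIntegral_apply hInt]

lemma fderiv_poincareGauge_sub (hB : ∀ j k, ContDiff ℝ (⊤ : ℕ∞) fun x => B x j k)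
    (hskew : ∀ x j k, B x k j = - B x j k)
    (hclosed : ∀ (x : EuclideanSpace ℝ (Fin d)) (j k l : Fin d),
      fderiv ℝ (fun y => B y k l) x (EuclideanSpace.single j (1:ℝ))
      + fderiv ℝ (fun y => B y l j) x (EuclideanSpace.single k (1:ℝ))
      + fderiv ℝ (fun y => B y j k) x (EuclideanSpace.single l (1:ℝ)) = 0)
    (j k : Fin d) (x : EuclideanSpace ℝ (Fin d)) :
    fderiv ℝ (fun x => poincareGauge d B x k) x (EuclideanSpace.single j (1 : ℝ)) -
      fderiv ℝ (fun x => poincareGauge d B x j) x (EuclideanSpace.single k (1 : ℝ)) = B x j k := by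
  obtain ⟨hi1, h1⟩ := fderiv_poincareGauge_apply hB j k x
  obtain ⟨hi2, h2⟩ := fderiv_poincareGauge_apply hB k j x
  rw [h1, h2, ← intervalIntegral.integral_sub hi1 hi2]
  have hderiv : ∀ u : ℝ, HasDerivAt (fun u : ℝ => u ^ 2 * B (u • x) j k)
      ((B (u • x) j k + u * ∑ l, x l *
        fderiv ℝ (fun y => B y l k) (u • x) (EuclideanSpace.single j (1 : ℝ))) * u -
      (B (u • x) k j + u * ∑ l, x l *
        fderiv ℝ (fun y => B y l j) (u • x) (EuclideanSpace.single k (1 : ℝ))) * u) u := by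
    intro u
    have h3 : HasDerivAt (fun u : ℝ => B (u • x) j k) (fderiv ℝ (fun y => B y j k) (u • x) x) u := by
      have h4 : HasDerivAt (fun u : ℝ => u • x) x u := by
        simpa using (hasDerivAt_id u).smul_const x
      exact (((hB j k).differentiable (by simp) _).hasFDerivAt).comp_hasDerivAt u h4
    refine ((hasDerivAt_pow 2 u).fun_mul h3).congr_deriv ?_
    symm
    rw [EuclideanSpace.map_eq_sum_single (fderiv ℝ (fun y => B y j k) (u • x)) x]
    have h5 : ∀ l, fderiv ℝ (fun y => B y j k) (u • x) (EuclideanSpace.single l (1:ℝ)) =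
        fderiv ℝ (fun y => B y l k) (u • x) (EuclideanSpace.single j (1:ℝ)) -
        fderiv ℝ (fun y => B y l j) (u • x) (EuclideanSpace.single k (1:ℝ)) := by
      intro l
      have h6 : (fun y => B y k l) = fun y => - B y l k := funext fun y => hskew y l k
      have h7 := hclosed (u • x) j k l
      rw [h6, fderiv_fun_neg] at h7
      simp only [neg_apply] at h7
      linarith
    simp only [h5, smul_eq_mul, mul_sub, Finset.sum_sub_distrib, hskew _ j k]
    push_cast
    ring
  rw [intervalIntegral.integral_eq_sub_of_hasDerivAt (fun u _ => hderiv u) (hi1.sub hi2)]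
  simp

end PoincareGauge

section Gluing

/-- The open half-space `{x | R < x i}` or `{x | R < -x i}`, according to the sign `σ.2`. -/
def coordHalfSpace {d : ℕ} (R : ℝ) (σ : Fin d × Bool) : Set (EuclideanSpace ℝ (Fin d)) :=
  {x | R < (if σ.2 then 1 else -1) * x σ.1}

variable {d : ℕ} {R : ℝ}

lemma isOpen_coordHalfSpace (σ : Fin d × Bool) : IsOpen (coordHalfSpace R σ) :=
  isOpen_lt continuous_const
    (continuous_const.mul (EuclideanSpace.proj (𝕜 := ℝ) σ.1).continuous)

lemma convex_coordHalfSpace (σ : Fin d × Bool) : Convex ℝ (coordHalfSpace R σ) :=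
  convex_halfSpace_gt (IsLinearMap.mk (by intro x y; simp only [PiLp.add_apply]; ring) (by intro c x; simp)) R

lemma mem_coordHalfSpace_abs (σ : Fin d × Bool) {x : EuclideanSpace ℝ (Fin d)}
    (hx : x ∈ coordHalfSpace R σ) : R < |x σ.1| := by
  simp only [coordHalfSpace, Set.mem_ofPred_eq] at hx
  split_ifs at hx
  · rw [one_mul] at hx; exact hx.trans_le (le_abs_self _)
  · rw [neg_one_mul] at hx; exact hx.trans_le (neg_le_abs _)

lemma exists_mem_coordHalfSpace {x : EuclideanSpace ℝ (Fin d)} {i : Fin d} (hx : R < |x i|) :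
    ∃ σ : Fin d × Bool, x ∈ coordHalfSpace R σ := by
  rcases lt_abs.1 hx with h | h
  · exact ⟨(i, true), by simpa [coordHalfSpace] using h⟩
  · exact ⟨(i, false), by simpa [coordHalfSpace] using h⟩

lemma exists_mem_coordHalfSpace_inter (ε : Fin d → Bool) :
    ∃ x : EuclideanSpace ℝ (Fin d), ∀ i, x ∈ coordHalfSpace R (i, ε i) := by
  refine ⟨WithLp.toLp 2 fun i => (if ε i then 1 else -1) * (R + 1), fun i => ?_⟩
  simp only [coordHalfSpace, Set.mem_ofPred_eq]
  split_ifs <;> linarith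

lemma exists_mem_coordHalfSpace_three {σ τ ρ : Fin d × Bool} (h1 : σ.1 ≠ τ.1)
    (h2 : τ.1 ≠ ρ.1) (h3 : σ.1 ≠ ρ.1) : ∃ x : EuclideanSpace ℝ (Fin d),
    x ∈ coordHalfSpace R σ ∧ x ∈ coordHalfSpace R τ ∧ x ∈ coordHalfSpace R ρ := by
  obtain ⟨x, hx⟩ := exists_mem_coordHalfSpace_inter (R := R)
    (fun i => if i = σ.1 then σ.2 else if i = τ.1 then τ.2 else ρ.2)
  exact ⟨x, by simpa using hx σ.1, by simpa [h1.symm] using hx τ.1,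
    by simpa [h2.symm, h3.symm] using hx ρ.1⟩

lemma exists_mem_coordHalfSpace_two {σ τ : Fin d × Bool} (h1 : σ.1 ≠ τ.1) :
    ∃ x : EuclideanSpace ℝ (Fin d), x ∈ coordHalfSpace R σ ∧ x ∈ coordHalfSpace R τ := by
  obtain ⟨x, hx⟩ := exists_mem_coordHalfSpace_inter (R := R)
    (fun i => if i = σ.1 then σ.2 else τ.2)
  exact ⟨x, by simpa using hx σ.1, by simpa [h1.symm] using hx τ.1⟩

/-- A `1`-cocycle on the nerve of the cover by half-spaces (the octahedral sphere) is a coboundary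
in dimension at least three. -/
lemma exists_coboundary (hd : 3 ≤ d) (k : Fin d × Bool → Fin d × Bool → ℝ)
    (hanti : ∀ σ τ, σ.1 ≠ τ.1 → k σ τ = - k τ σ)
    (hcoc : ∀ σ τ ρ, σ.1 ≠ τ.1 → τ.1 ≠ ρ.1 → σ.1 ≠ ρ.1 → k σ τ + k τ ρ = k σ ρ) :
    ∃ a : Fin d × Bool → ℝ, ∀ σ τ, σ.1 ≠ τ.1 → a τ - a σ = k σ τ := by
  obtain ⟨i₀, i₁, i₂, h01, h02, h12⟩ : ∃ i₀ i₁ i₂ : Fin d, i₀ ≠ i₁ ∧ i₀ ≠ i₂ ∧ i₁ ≠ i₂ :=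
    ⟨⟨0, by omega⟩, ⟨1, by omega⟩, ⟨2, by omega⟩, by simp, by simp, by simp⟩
  let a : Fin d × Bool → ℝ := fun τ =>
    if τ.1 = i₀ then
      if τ.2 then 0 else k (i₀, true) (i₁, true) - k (i₀, false) (i₁, true)
    else k (i₀, true) τ
  have ha : ∀ τ, τ.1 ≠ i₀ → a τ = k (i₀, true) τ := fun τ h => by simp [a, h]
  have hat : a (i₀, true) = 0 := by simp [a]
  have haf : a (i₀, false) = k (i₀, true) (i₁, true) - k (i₀, false) (i₁, true) := by simp [a]
  have hne : ∀ σ τ, σ.1 ≠ τ.1 → σ.1 ≠ i₀ → τ.1 ≠ i₀ → a τ - a σ = k σ τ := by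
    intro σ τ h hσ hτ
    rw [ha _ hσ, ha _ hτ]
    linarith [hcoc (i₀, true) σ τ hσ.symm h hτ.symm]
  have hzero : ∀ b τ, τ.1 ≠ i₀ → a τ - a (i₀, b) = k (i₀, b) τ := by
    rintro (_ | _) τ hτ
    · have hgen : ∀ τ : Fin d × Bool, τ.1 ≠ i₀ → τ.1 ≠ i₁ →
          a τ - a (i₀, false) = k (i₀, false) τ := by
        intro τ hτ h1
        have e1 := hne (i₁, true) τ h1.symm h01.symm hτ
        have e2 := hcoc (i₀, false) (i₁, true) τ h01 h1.symm hτ.symm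
        have e3 := ha (i₁, true) h01.symm
        linarith
      by_cases h1 : τ.1 = i₁
      · have h2 : i₂ ≠ τ.1 := by rw [h1]; exact h12.symm
        have e1 := hne (i₂, true) τ h2 h02.symm hτ
        have e2 := hcoc (i₀, false) (i₂, true) τ h02 h2 hτ.symm
        have e3 := hgen (i₂, true) h02.symm h12.symm
        linarith
      · exact hgen τ hτ h1
    · rw [ha _ hτ, hat, sub_zero]
  refine ⟨a, fun σ τ h => ?_⟩
  by_cases hσ : σ.1 = i₀
  · obtain ⟨i, b⟩ := σ
    obtain rfl : i = i₀ := hσ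
    exact hzero b τ h.symm
  · by_cases hτ : τ.1 = i₀
    · obtain ⟨i, b⟩ := τ
      obtain rfl : i = i₀ := hτ
      rw [hanti _ _ h, ← hzero b σ hσ]
      ring
    · exact hne σ τ h hσ hτ

/-- In dimension at least three, a `1`-form that is closed outside a cube is exact there. -/
lemma exists_hasFDerivAt_compl_cube (hd : 3 ≤ d) (hR : 0 ≤ R)
    {ω : EuclideanSpace ℝ (Fin d) → EuclideanSpace ℝ (Fin d) →L[ℝ] ℝ} (hω : Differentiable ℝ ω)
    (hsymm : ∀ x : EuclideanSpace ℝ (Fin d), (∃ i, R < |x i|) →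
      ∀ v w, fderiv ℝ ω x v w = fderiv ℝ ω x w v) :
    ∃ χ : EuclideanSpace ℝ (Fin d) → ℝ, ∀ x : EuclideanSpace ℝ (Fin d), (∃ i, R < |x i|) →
      HasFDerivAt χ (ω x) x := by
  have hloc : ∀ σ : Fin d × Bool, ∃ f : EuclideanSpace ℝ (Fin d) → ℝ,
      ∀ x ∈ coordHalfSpace R σ, HasFDerivAt f (ω x) x := fun σ =>
    (convex_coordHalfSpace σ).exists_forall_hasFDerivAt_of_fderiv_symmetric
      (isOpen_coordHalfSpace σ) hω.differentiableOn
      fun x hx => hsymm x ⟨_, mem_coordHalfSpace_abs σ hx⟩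
  choose f hf using hloc
  have hk : ∀ σ τ : Fin d × Bool, ∃ c : ℝ,
      ∀ x ∈ coordHalfSpace R σ ∩ coordHalfSpace R τ, f σ x - f τ x = c := fun σ τ => by
    have hder : ∀ x ∈ coordHalfSpace R σ ∩ coordHalfSpace R τ,
        HasFDerivAt (fun x => f σ x - f τ x) (0 : EuclideanSpace ℝ (Fin d) →L[ℝ] ℝ) x :=
      fun x hx => by simpa using (hf σ x hx.1).fun_sub (hf τ x hx.2)
    exact ((isOpen_coordHalfSpace σ).inter (isOpen_coordHalfSpace τ)
      ).exists_is_const_of_fderiv_eq_zero (𝕜 := ℝ)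
      ((convex_coordHalfSpace σ).inter (convex_coordHalfSpace τ)).isPreconnected
      (fun x hx => (hder x hx).differentiableAt.differentiableWithinAt)
      fun x hx => (hder x hx).fderiv
  choose k hk using hk
  obtain ⟨a, ha⟩ := exists_coboundary hd k
    (fun σ τ h => by
      obtain ⟨x, h1, h2⟩ := exists_mem_coordHalfSpace_two (R := R) h
      rw [← hk σ τ x ⟨h1, h2⟩, ← hk τ σ x ⟨h2, h1⟩]
      ring)
    (fun σ τ ρ h h' h'' => by
      obtain ⟨x, h1, h2, h3⟩ := exists_mem_coordHalfSpace_three (R := R) h h' h''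
      rw [← hk σ τ x ⟨h1, h2⟩, ← hk τ ρ x ⟨h2, h3⟩, ← hk σ ρ x ⟨h1, h3⟩]
      ring)
  have hagree : ∀ σ τ x, x ∈ coordHalfSpace R σ → x ∈ coordHalfSpace R τ →
      f σ x + a σ = f τ x + a τ := by
    intro σ τ x hσ hτ
    by_cases h : σ.1 = τ.1
    · suffices σ = τ by rw [this]
      refine Prod.ext h ?_
      simp only [coordHalfSpace, Set.mem_ofPred_eq, h] at hσ hτ
      by_contra hne
      cases h1 : σ.2 <;> cases h2 : τ.2 <;> simp_all <;> linarith
    · have e1 := ha σ τ h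
      have e2 := hk σ τ x ⟨hσ, hτ⟩
      linarith
  classical
  let χ : EuclideanSpace ℝ (Fin d) → ℝ := fun x =>
    if h : ∃ σ, x ∈ coordHalfSpace R σ then f h.choose x + a h.choose else 0
  have hχ : ∀ σ x, x ∈ coordHalfSpace R σ → χ x = f σ x + a σ := by
    intro σ x hx
    have h : ∃ σ, x ∈ coordHalfSpace R σ := ⟨σ, hx⟩
    simp only [χ, dif_pos h]
    exact hagree _ _ _ h.choose_spec hx
  refine ⟨χ, fun x ⟨i, hi⟩ => ?_⟩
  obtain ⟨σ, hσ⟩ := exists_mem_coordHalfSpace hi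
  refine ((hf σ x hσ).add_const (a σ)).congr_of_eventuallyEq ?_
  filter_upwards [(isOpen_coordHalfSpace σ).mem_nhds hσ] with y hy using hχ σ y hy

end Gluing

lemma exists_forall_lt_norm_eq_zero {E ι : Type*} [NormedAddCommGroup E] [Finite ι]
    {f : ι → E → ℝ} (hf : ∀ i, HasCompactSupport (f i)) :
    ∃ R : ℝ, 0 ≤ R ∧ ∀ i x, R < ‖x‖ → f i x = 0 := by
  have h : ∀ i, ∃ R : ℝ, ∀ x ∈ tsupport (f i), ‖x‖ ≤ R := fun i =>
    (hf i).isCompact.isBounded.exists_norm_le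
  choose r hr using h
  obtain ⟨M, hM⟩ := (Set.finite_range r).bddAbove
  refine ⟨max M 0, le_max_right _ _, fun i x hx => ?_⟩
  by_contra hne
  have h1 := hr i x (subset_tsupport _ hne)
  have h2 := hM (Set.mem_range_self i)
  linarith [le_max_left M 0]

/-- In dimension at least three the potential of a compactly supported field is a smooth gradient
outside a ball. -/
lemma exists_fderiv_eq_poincareGauge {d : ℕ} (hd : 3 ≤ d)
    {B : EuclideanSpace ℝ (Fin d) → Fin d → Fin d → ℝ}
    (hB : ∀ j k, ContDiff ℝ (⊤ : ℕ∞) fun x => B x j k)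
    (hsupp : ∀ j k, HasCompactSupport fun x => B x j k)
    (hskew : ∀ x j k, B x k j = - B x j k)
    (hclosed : ∀ (x : EuclideanSpace ℝ (Fin d)) (j k l : Fin d),
      fderiv ℝ (fun y => B y k l) x (EuclideanSpace.single j (1:ℝ))
      + fderiv ℝ (fun y => B y l j) x (EuclideanSpace.single k (1:ℝ))
      + fderiv ℝ (fun y => B y j k) x (EuclideanSpace.single l (1:ℝ)) = 0) :
    ∃ R : ℝ, ∃ χ : EuclideanSpace ℝ (Fin d) → ℝ, 0 < R ∧ ∀ x, R < ‖x‖ →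
      ContDiffAt ℝ (⊤ : ℕ∞) χ x ∧
      ∀ j, fderiv ℝ χ x (EuclideanSpace.single j (1:ℝ)) = poincareGauge d B x j := by
  obtain ⟨R, hR, hzero⟩ := exists_forall_lt_norm_eq_zero
    (f := fun (p : Fin d × Fin d) x => B x p.1 p.2) fun p => hsupp p.1 p.2
  let ω : EuclideanSpace ℝ (Fin d) → EuclideanSpace ℝ (Fin d) →L[ℝ] ℝ := fun x =>
    ∑ j, poincareGauge d B x j • EuclideanSpace.proj (𝕜 := ℝ) j
  have hω : ContDiff ℝ (⊤ : ℕ∞) ω :=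
    ContDiff.sum fun j _ => (contDiff_poincareGauge hB j).smul contDiff_const
  have hωd : ∀ x v w, fderiv ℝ ω x v w =
      ∑ j, ∑ k, v j * w k *
        fderiv ℝ (fun x => poincareGauge d B x k) x (EuclideanSpace.single j 1) := by
    intro x v w
    have h1 : HasFDerivAt ω (∑ k, (fderiv ℝ (fun x => poincareGauge d B x k) x).smulRight
        (EuclideanSpace.proj (𝕜 := ℝ) k : EuclideanSpace ℝ (Fin d) →L[ℝ] ℝ)) x :=
      HasFDerivAt.fun_sum fun k _ => HasFDerivAt.smul_const
        (((contDiff_poincareGauge hB k).differentiable (by simp) x).hasFDerivAt)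
        (EuclideanSpace.proj (𝕜 := ℝ) k : EuclideanSpace ℝ (Fin d) →L[ℝ] ℝ)
    rw [h1.fderiv, Finset.sum_comm]
    simp only [sum_apply, ContinuousLinearMap.smulRight_apply,
      smul_apply, PiLp.proj_apply, smul_eq_mul]
    refine Finset.sum_congr rfl fun k _ => ?_
    rw [EuclideanSpace.map_eq_sum_single _ v, Finset.sum_mul]
    exact Finset.sum_congr rfl fun j _ => by rw [smul_eq_mul]; ring
  have hout : ∀ (x : EuclideanSpace ℝ (Fin d)), (∃ i, R < |x i|) → ∀ j k, B x j k = 0 := by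
    rintro x ⟨i, hi⟩ j k
    exact hzero (j, k) x (hi.trans_le (PiLp.norm_apply_le x i))
  obtain ⟨χ, hχ⟩ := exists_hasFDerivAt_compl_cube hd hR (hω.differentiable (by simp))
    (fun x hx v w => by
      rw [hωd, hωd, Finset.sum_comm]
      refine Finset.sum_congr rfl fun k _ => Finset.sum_congr rfl fun j _ => ?_
      have := fderiv_poincareGauge_sub hB hskew hclosed j k x
      rw [hout x hx, sub_eq_zero] at this
      rw [this]
      ring)
  have hopen : IsOpen {x : EuclideanSpace ℝ (Fin d) | ∃ i, R < |x i|} := by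
    simp only [Set.ofPred_exists]
    exact isOpen_iUnion fun i => isOpen_lt continuous_const
      (EuclideanSpace.proj (𝕜 := ℝ) i).continuous.abs
  have hsmooth : ContDiffOn ℝ (⊤ : ℕ∞) χ {x | ∃ i, R < |x i|} := by
    rw [contDiffOn_infty_iff_fderiv_of_isOpen hopen]
    exact ⟨fun x hx => (hχ x hx).differentiableAt.differentiableWithinAt,
      hω.contDiffOn.congr fun x hx => (hχ x hx).fderiv⟩
  refine ⟨d * R + 1, χ, by positivity, fun x hx => ?_⟩
  have hmem : ∃ i, R < |x i| := by
    by_contra! hle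
    have h1 : ‖x‖ ≤ ∑ i, |x i| := by
      conv_lhs => rw [← (EuclideanSpace.basisFun (Fin d) ℝ).sum_repr x]
      refine (norm_sum_le _ _).trans (Finset.sum_le_sum fun i _ => ?_)
      simp [norm_smul]
    have h2 : ∑ i, |x i| ≤ d * R := by
      refine (Finset.sum_le_sum fun i _ => hle i).trans ?_
      simp
    linarith
  refine ⟨hsmooth.contDiffAt (hopen.mem_nhds hmem), fun j => ?_⟩
  rw [(hχ x hmem).fderiv]
  simp [ω]

section LowerBound

variable {d : ℕ}

lemma norm_sub_I_mul_add_inner_nonneg (D z : ℂ) (α F : ℝ) :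
    0 ≤ ‖D - Complex.I * (α : ℂ) * z‖ ^ 2 + F * (2 * inner ℝ z D) + F ^ 2 * ‖z‖ ^ 2 := by
  have h : ‖D - Complex.I * (α : ℂ) * z‖ ^ 2 + F * (2 * inner ℝ z D) + F ^ 2 * ‖z‖ ^ 2 =
      ‖D - Complex.I * (α : ℂ) * z + (F : ℂ) * z‖ ^ 2 := by
    simp only [Complex.sq_norm, Complex.normSq_apply, Complex.inner]
    simp
    ring
  rw [h]
  positivity

lemma hardy_divergence_bound {n r ε : ℝ} (hn : 2 ≤ n) (hr : 0 ≤ r) (hε : 0 < ε) :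
    ((n - 2) / 2) ^ 2 / (r + ε) + 1 / 2 - r / 16 ≤
      n * ((n - 2) / 2 / (r + ε) + 1 / 4) - 2 * ((n - 2) / 2) * r / (r + ε) ^ 2 -
        ((n - 2) / 2 / (r + ε) + 1 / 4) ^ 2 * r := by
  obtain ⟨a, rfl⟩ : ∃ a, n = 2 * a + 2 := ⟨(n - 2) / 2, by ring⟩
  have ha : 0 ≤ a := by linarith
  have hpos : 0 < r + ε := by linarith
  obtain ⟨q, hq⟩ : ∃ q, q = (r + ε)⁻¹ := ⟨_, rfl⟩
  have hq0 : 0 < q := hq ▸ inv_pos.2 hpos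
  have hrq : r * q ≤ 1 := by
    have : (r + ε) * q = 1 := by rw [hq]; exact mul_inv_cancel₀ hpos.ne'
    nlinarith
  have e : (2 * a + 2 - 2) / 2 = a := by ring
  simp only [e, div_eq_mul_inv, ← inv_pow (r + ε), ← hq]
  have h1 := mul_nonneg (mul_nonneg ha hq0.le) (sub_nonneg.2 hrq)
  have h2 := mul_nonneg (mul_nonneg (sq_nonneg a) hq0.le) (sub_nonneg.2 hrq)
  have h3 := mul_nonneg ha (sub_nonneg.2 hrq)
  nlinarith

lemma integrable_of_eq_zero_off_tsupport {ψ : EuclideanSpace ℝ (Fin d) → ℂ}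
    (hc : HasCompactSupport ψ) {f : EuclideanSpace ℝ (Fin d) → ℝ} (hf : Continuous f)
    (hz : ∀ y, ψ y = 0 → fderiv ℝ ψ y = 0 → f y = 0) : Integrable f :=
  hf.integrable_of_hasCompactSupport <| HasCompactSupport.intro hc.isCompact fun y hy =>
    hz y (image_eq_zero_of_notMem_tsupport hy) (fderiv_of_notMem_tsupport ℝ hy)

lemma hasFDerivAt_hardyField (a ε : ℝ) (hε : 0 < ε) (j : Fin d) (y : EuclideanSpace ℝ (Fin d)) :
    HasFDerivAt (fun y : EuclideanSpace ℝ (Fin d) => (a / (‖y‖ ^ 2 + ε) + 1 / 4) * y j)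
      ((a / (‖y‖ ^ 2 + ε) + 1 / 4) • (EuclideanSpace.proj (𝕜 := ℝ) j) +
        y j • (-(a / (‖y‖ ^ 2 + ε) ^ 2) • (2 • innerSL ℝ y))) y := by
  refine HasFDerivAt.fun_mul ?_ (EuclideanSpace.proj (𝕜 := ℝ) j).hasFDerivAt
  have h1 : HasFDerivAt (fun y : EuclideanSpace ℝ (Fin d) => ‖y‖ ^ 2 + ε) (2 • innerSL ℝ y) y :=
    (hasStrictFDerivAt_norm_sq y).hasFDerivAt.add_const ε
  have hne : ‖y‖ ^ 2 + ε ≠ 0 := by positivity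
  have h2 : HasDerivAt (fun t : ℝ => a / t + 1 / 4) (-(a / (‖y‖ ^ 2 + ε) ^ 2)) (‖y‖ ^ 2 + ε) := by
    have := ((hasDerivAt_inv hne).const_mul a).add_const (1 / 4 : ℝ)
    simpa [div_eq_mul_inv] using this
  exact h2.comp_hasFDerivAt y h1

lemma hardy_regularized (hd : 2 ≤ d) {α : EuclideanSpace ℝ (Fin d) → Fin d → ℝ}
    (hα : ∀ j, Continuous fun y => α y j) {ψ : EuclideanSpace ℝ (Fin d) → ℂ}
    (hψ : ContDiff ℝ (⊤ : ℕ∞) ψ) (hc : HasCompactSupport ψ) {ε : ℝ} (hε : 0 < ε) :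
    ((d - 2 : ℝ) / 2) ^ 2 * (∫ y, ‖ψ y‖ ^ 2 / (‖y‖ ^ 2 + ε)) + 1 / 2 * (∫ y, ‖ψ y‖ ^ 2) -
      1 / 16 * (∫ y, ‖y‖ ^ 2 * ‖ψ y‖ ^ 2) ≤
    ∫ y, ∑ j, ‖fderiv ℝ ψ y (EuclideanSpace.single j (1 : ℝ)) -
      Complex.I * (α y j : ℝ) * ψ y‖ ^ 2 := by
  have hψc : Continuous ψ := hψ.continuous
  have hψ'c : ∀ v, Continuous fun y => fderiv ℝ ψ y v := fun v =>
    (hψ.continuous_fderiv (by simp)).clm_apply continuous_const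
  have hpos : ∀ y : EuclideanSpace ℝ (Fin d), ‖y‖ ^ 2 + ε ≠ 0 := fun y => by positivity
  have hcoord : ∀ j, Continuous fun y : EuclideanSpace ℝ (Fin d) => y j := fun j =>
    (EuclideanSpace.proj (𝕜 := ℝ) j).continuous
  have hα' : ∀ j, Continuous fun y => ((α y j : ℝ) : ℂ) := fun j =>
    Complex.continuous_ofReal.comp (hα j)
  set a : ℝ := (d - 2 : ℝ) / 2 with ha
  have hu : ∀ y v, fderiv ℝ (fun y => ‖ψ y‖ ^ 2) y v = 2 * inner ℝ (ψ y) (fderiv ℝ ψ y v) := by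
    intro y v
    rw [((hψ.differentiable (by simp) y).hasFDerivAt.norm_sq).fderiv]
    simp only [smul_apply, ContinuousLinearMap.comp_apply, innerSL_apply_apply, nsmul_eq_mul,
      Nat.cast_ofNat]
  have hwc : Continuous fun y : EuclideanSpace ℝ (Fin d) => a / (‖y‖ ^ 2 + ε) + 1 / 4 := by
    fun_prop (disch := exact hpos _)
  have hFd : ∀ (j : Fin d) (y : EuclideanSpace ℝ (Fin d)),
      fderiv ℝ (fun y : EuclideanSpace ℝ (Fin d) => (a / (‖y‖ ^ 2 + ε) + 1 / 4) * y j) y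
        (EuclideanSpace.single j 1) =
      (a / (‖y‖ ^ 2 + ε) + 1 / 4) - 2 * a * y j ^ 2 / (‖y‖ ^ 2 + ε) ^ 2 := by
    intro j y
    rw [(hasFDerivAt_hardyField a ε hε j y).fderiv]
    simp [EuclideanSpace.inner_single_right]
    ring
  have hK : ∀ j, Integrable fun y : EuclideanSpace ℝ (Fin d) =>
      ((a / (‖y‖ ^ 2 + ε) + 1 / 4) * y j) *
        (2 * inner ℝ (ψ y) (fderiv ℝ ψ y (EuclideanSpace.single j 1))) := fun j =>
    integrable_of_eq_zero_off_tsupport hc (by fun_prop) fun y h _ => by simp [h]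
  have hdiv : ∀ j, Integrable fun y : EuclideanSpace ℝ (Fin d) =>
      ((a / (‖y‖ ^ 2 + ε) + 1 / 4) - 2 * a * y j ^ 2 / (‖y‖ ^ 2 + ε) ^ 2) * ‖ψ y‖ ^ 2 := fun j =>
    integrable_of_eq_zero_off_tsupport hc
      (by fun_prop (disch := exact fun y => pow_ne_zero 2 (hpos y)))
      fun y h _ => by simp [h]
  have hparts : ∀ j : Fin d,
      ∫ y : EuclideanSpace ℝ (Fin d), ((a / (‖y‖ ^ 2 + ε) + 1 / 4) * y j) *
        (2 * inner ℝ (ψ y) (fderiv ℝ ψ y (EuclideanSpace.single j 1))) =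
      - ∫ y, ((a / (‖y‖ ^ 2 + ε) + 1 / 4) - 2 * a * y j ^ 2 / (‖y‖ ^ 2 + ε) ^ 2) * ‖ψ y‖ ^ 2 := by
    intro j
    have h := integral_mul_fderiv_eq_neg_fderiv_mul_of_integrable (𝕜 := ℝ)
      (μ := (volume : Measure (EuclideanSpace ℝ (Fin d))))
      (f := fun y : EuclideanSpace ℝ (Fin d) => (a / (‖y‖ ^ 2 + ε) + 1 / 4) * y j)
      (g := fun y => ‖ψ y‖ ^ 2) (v := EuclideanSpace.single j 1)
    simp only [hFd, hu] at h
    refine h (hdiv j) (hK j) ?_ (fun y _ => (hasFDerivAt_hardyField a ε hε j y).differentiableAt)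
      fun y _ => (hψ.differentiable (by simp) y).norm_sq ℝ
    exact integrable_of_eq_zero_off_tsupport hc (by fun_prop) fun y h _ => by simp [h]
  have hD : ∀ j, Integrable fun y => ‖fderiv ℝ ψ y (EuclideanSpace.single j (1 : ℝ)) -
      Complex.I * (α y j : ℝ) * ψ y‖ ^ 2 := fun j =>
    integrable_of_eq_zero_off_tsupport hc (by fun_prop) fun y h h' => by simp [h, h']
  have hu1 : Integrable fun y => ‖ψ y‖ ^ 2 :=
    integrable_of_eq_zero_off_tsupport hc (by fun_prop) fun y h _ => by simp [h]
  have hu2 : Integrable fun y => ‖y‖ ^ 2 * ‖ψ y‖ ^ 2 :=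
    integrable_of_eq_zero_off_tsupport hc (by fun_prop) fun y h _ => by simp [h]
  have hu3 : Integrable fun y => ‖ψ y‖ ^ 2 / (‖y‖ ^ 2 + ε) :=
    integrable_of_eq_zero_off_tsupport hc (by fun_prop (disch := exact hpos _))
      fun y h _ => by simp [h]
  have hpoint : ∀ y, a ^ 2 * (‖ψ y‖ ^ 2 / (‖y‖ ^ 2 + ε)) + 1 / 2 * ‖ψ y‖ ^ 2 -
      1 / 16 * (‖y‖ ^ 2 * ‖ψ y‖ ^ 2) ≤
      ∑ j, (‖fderiv ℝ ψ y (EuclideanSpace.single j (1 : ℝ)) -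
        Complex.I * (α y j : ℝ) * ψ y‖ ^ 2 +
        ((a / (‖y‖ ^ 2 + ε) + 1 / 4) * y j) *
          (2 * inner ℝ (ψ y) (fderiv ℝ ψ y (EuclideanSpace.single j 1))) +
        ((a / (‖y‖ ^ 2 + ε) + 1 / 4) - 2 * a * y j ^ 2 / (‖y‖ ^ 2 + ε) ^ 2) * ‖ψ y‖ ^ 2) := by
    intro y
    have h1 := Finset.sum_nonneg fun j (_ : j ∈ Finset.univ) => norm_sub_I_mul_add_inner_nonneg
      (fderiv ℝ ψ y (EuclideanSpace.single j (1 : ℝ))) (ψ y) (α y j)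
      ((a / (‖y‖ ^ 2 + ε) + 1 / 4) * y j)
    have h2 := mul_le_mul_of_nonneg_right (hardy_divergence_bound (n := d) (by exact_mod_cast hd)
      (sq_nonneg ‖y‖) hε) (sq_nonneg ‖ψ y‖)
    have h3 : ‖y‖ ^ 2 = ∑ j, y j ^ 2 := by simp [EuclideanSpace.norm_sq_eq]
    have h4 : ∑ j, ((a / (‖y‖ ^ 2 + ε) + 1 / 4) * y j) ^ 2 * ‖ψ y‖ ^ 2 =
        (a / (‖y‖ ^ 2 + ε) + 1 / 4) ^ 2 * ‖y‖ ^ 2 * ‖ψ y‖ ^ 2 := by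
      simp_rw [mul_pow, ← Finset.sum_mul, ← Finset.mul_sum, ← h3]
    have h5 : ∑ j, ((a / (‖y‖ ^ 2 + ε) + 1 / 4) - 2 * a * y j ^ 2 / (‖y‖ ^ 2 + ε) ^ 2) *
        ‖ψ y‖ ^ 2 = (d * (a / (‖y‖ ^ 2 + ε) + 1 / 4) -
          2 * a * ‖y‖ ^ 2 / (‖y‖ ^ 2 + ε) ^ 2) * ‖ψ y‖ ^ 2 := by
      rw [← Finset.sum_mul, Finset.sum_sub_distrib, ← Finset.sum_div, ← Finset.mul_sum, ← h3,
        Finset.sum_const, Finset.card_univ, Fintype.card_fin, nsmul_eq_mul]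
    rw [Finset.sum_add_distrib, h4] at h1
    rw [Finset.sum_add_distrib, h5]
    rw [← ha] at h2
    have h6 : a ^ 2 * (‖ψ y‖ ^ 2 / (‖y‖ ^ 2 + ε)) = a ^ 2 / (‖y‖ ^ 2 + ε) * ‖ψ y‖ ^ 2 := by ring
    rw [h6]
    linarith
  have hsum : ∫ y, ∑ j, (‖fderiv ℝ ψ y (EuclideanSpace.single j (1 : ℝ)) -
        Complex.I * (α y j : ℝ) * ψ y‖ ^ 2 +
        ((a / (‖y‖ ^ 2 + ε) + 1 / 4) * y j) *
          (2 * inner ℝ (ψ y) (fderiv ℝ ψ y (EuclideanSpace.single j 1))) +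
        ((a / (‖y‖ ^ 2 + ε) + 1 / 4) - 2 * a * y j ^ 2 / (‖y‖ ^ 2 + ε) ^ 2) * ‖ψ y‖ ^ 2) =
      ∫ y, ∑ j, ‖fderiv ℝ ψ y (EuclideanSpace.single j (1 : ℝ)) -
        Complex.I * (α y j : ℝ) * ψ y‖ ^ 2 := by
    rw [integral_finsetSum _ fun j _ => ((hD j).fun_add (hK j)).fun_add (hdiv j),
      integral_finsetSum _ fun j _ => hD j]
    refine Finset.sum_congr rfl fun j _ => ?_
    rw [integral_add ((hD j).fun_add (hK j)) (hdiv j), integral_add (hD j) (hK j), hparts j]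
    ring
  rw [← integral_const_mul, ← integral_const_mul, ← integral_const_mul,
    ← integral_add (hu3.const_mul _) (hu1.const_mul _),
    ← integral_sub ((hu3.const_mul _).fun_add (hu1.const_mul _)) (hu2.const_mul _), ← hsum]
  exact integral_mono (((hu3.const_mul _).fun_add (hu1.const_mul _)).sub (hu2.const_mul _))
    (integrable_finsetSum _ fun j _ => ((hD j).fun_add (hK j)).fun_add (hdiv j)) hpoint

lemma half_mul_integral_le_form (hd : 3 ≤ d) {α : EuclideanSpace ℝ (Fin d) → Fin d → ℝ}
    (hα : ∀ j, Continuous fun y => α y j) {ψ : EuclideanSpace ℝ (Fin d) → ℂ}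
    (hψ : ContDiff ℝ (⊤ : ℕ∞) ψ) (hc : HasCompactSupport ψ) :
    1 / 2 * (∫ y, ‖ψ y‖ ^ 2) ≤
      (∫ y, ∑ j, ‖fderiv ℝ ψ y (EuclideanSpace.single j (1 : ℝ)) -
        Complex.I * (α y j : ℝ) * ψ y‖ ^ 2) -
      ((d - 2 : ℝ) / 2) ^ 2 * (∫ y, ‖ψ y‖ ^ 2 / ‖y‖ ^ 2) +
      (1 / 16 : ℝ) * ∫ y, ‖y‖ ^ 2 * ‖ψ y‖ ^ 2 := by
  have : Nonempty (Fin d) := ⟨⟨0, by omega⟩⟩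
  have hreg := fun ε (hε : 0 < ε) => hardy_regularized (by omega : 2 ≤ d) hα hψ hc (ε := ε) hε
  by_cases hInt : Integrable fun y => ‖ψ y‖ ^ 2 / ‖y‖ ^ 2
  · have hlim : Tendsto (fun n : ℕ => ∫ y, ‖ψ y‖ ^ 2 / (‖y‖ ^ 2 + 1 / ((n : ℝ) + 1))) atTop
        (nhds (∫ y, ‖ψ y‖ ^ 2 / ‖y‖ ^ 2)) := by
      have hne : ∀ᵐ y : EuclideanSpace ℝ (Fin d), y ≠ 0 := Measure.ae_ne volume 0
      refine tendsto_integral_of_dominated_convergence _ (fun n => ?_) hInt (fun n => ?_) ?_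
      · have hpos : ∀ y : EuclideanSpace ℝ (Fin d), ‖y‖ ^ 2 + 1 / ((n : ℝ) + 1) ≠ 0 :=
          fun y => by positivity
        have hψc := hψ.continuous
        exact Continuous.aestronglyMeasurable (by fun_prop (disch := exact hpos _))
      · filter_upwards [hne] with y hy
        have : 0 < ‖y‖ := norm_pos_iff.2 hy
        rw [Real.norm_of_nonneg (by positivity)]
        gcongr
        have : 0 < 1 / ((n : ℝ) + 1) := by positivity
        linarith
      · filter_upwards [hne] with y hy
        have h0 : ‖y‖ ^ 2 ≠ 0 := by simpa using hy
        have h1 : Tendsto (fun n : ℕ => ‖y‖ ^ 2 + 1 / ((n : ℝ) + 1)) atTop (nhds (‖y‖ ^ 2)) := by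
          simpa using tendsto_one_div_add_atTop_nhds_zero_nat.const_add (‖y‖ ^ 2)
        exact tendsto_const_nhds.div h1 h0
    have h2 := le_of_tendsto (((hlim.const_mul (((d - 2 : ℝ) / 2) ^ 2)).add_const
      (1 / 2 * (∫ y, ‖ψ y‖ ^ 2))).sub_const (1 / 16 * (∫ y, ‖y‖ ^ 2 * ‖ψ y‖ ^ 2)))
      (Eventually.of_forall fun n => hreg _ (by positivity))
    linarith
  · rw [integral_undef hInt]
    have h1 := hreg 1 one_pos
    have h2 : 0 ≤ ∫ y, ‖ψ y‖ ^ 2 / (‖y‖ ^ 2 + 1) := integral_nonneg fun y => by positivity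
    have h3 := mul_nonneg (sq_nonneg ((d - 2 : ℝ) / 2)) h2
    linarith

end LowerBound

section RadialTestFunctions

lemma radial_groundState_identity (m : ℕ) {g : ℝ → ℝ} (hg : ContDiff ℝ 1 g)
    (hc : HasCompactSupport g) :
    (∫ r in Set.Ioi (0 : ℝ), r ^ (m + 2) * deriv g r ^ 2) -
      (((m : ℝ) + 1) / 2) ^ 2 * (∫ r in Set.Ioi (0 : ℝ), r ^ (m + 2) * (g r ^ 2 / r ^ 2)) +
      1 / 16 * (∫ r in Set.Ioi (0 : ℝ), r ^ (m + 2) * (r ^ 2 * g r ^ 2)) -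
      1 / 2 * (∫ r in Set.Ioi (0 : ℝ), r ^ (m + 2) * g r ^ 2) =
    ∫ r in Set.Ioi (0 : ℝ), r ^ m * (r * deriv g r + (((m : ℝ) + 1) / 2 + r ^ 2 / 4) * g r) ^ 2 := by
  have hgc : Continuous g := hg.continuous
  have hgd : Continuous (deriv g) := hg.continuous_deriv le_rfl
  have hInt : ∀ {f : ℝ → ℝ}, Continuous f → (∀ r, r ∉ tsupport g → f r = 0) →
      IntegrableOn f (Set.Ioi 0) := fun hf h =>
    (hf.integrable_of_hasCompactSupport (HasCompactSupport.intro hc h)).integrableOn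
  have hz : ∀ r, r ∉ tsupport g → g r = 0 := fun r hr => image_eq_zero_of_notMem_tsupport hr
  have hz' : ∀ r, r ∉ tsupport g → deriv g r = 0 := fun r hr => by
    rw [← fderiv_apply_one_eq_deriv, fderiv_of_notMem_tsupport ℝ hr]; rfl
  have h2 : (∫ r in Set.Ioi (0 : ℝ), r ^ (m + 2) * (g r ^ 2 / r ^ 2)) =
      ∫ r in Set.Ioi (0 : ℝ), r ^ m * g r ^ 2 := by
    refine setIntegral_congr_fun measurableSet_Ioi fun r hr => ?_
    have : r ≠ 0 := ne_of_gt hr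
    simp only [pow_add]
    field_simp
  set G : ℝ → ℝ := fun r => (((m : ℝ) + 1) / 2 + r ^ 2 / 4) * r ^ (m + 1) * g r ^ 2 with hG
  set G' : ℝ → ℝ := fun r => (r / 2 * r ^ (m + 1) +
    (((m : ℝ) + 1) / 2 + r ^ 2 / 4) * (((m : ℝ) + 1) * r ^ m)) * g r ^ 2 +
    (((m : ℝ) + 1) / 2 + r ^ 2 / 4) * r ^ (m + 1) * (2 * g r * deriv g r) with hG'
  have hGd : ∀ r, HasDerivAt G (G' r) r := fun r => by
    have e1 : HasDerivAt (fun r : ℝ => ((m : ℝ) + 1) / 2 + r ^ 2 / 4) (r / 2) r := by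
      have := ((hasDerivAt_pow 2 r).div_const 4).const_add (((m : ℝ) + 1) / 2)
      refine this.congr_deriv ?_
      norm_num; ring
    have e2 : HasDerivAt (fun r : ℝ => r ^ (m + 1)) (((m : ℝ) + 1) * r ^ m) r := by
      simpa using hasDerivAt_pow (m + 1) r
    have e3 : HasDerivAt (fun r => g r ^ 2) (2 * g r * deriv g r) r := by
      simpa using ((hg.differentiable one_ne_zero) r).hasDerivAt.fun_pow 2
    exact (e1.mul e2).mul e3
  have hGint : IntegrableOn G' (Set.Ioi 0) :=
    hInt (by fun_prop) fun r hr => by simp [hG', hz r hr]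
  have hG0 : ∫ r in Set.Ioi (0 : ℝ), G' r = 0 := by
    have hGs : HasCompactSupport G := HasCompactSupport.intro hc fun r hr => by simp [hG, hz r hr]
    have := integral_Ioi_of_hasDerivAt_of_tendsto (a := 0)
      (hGd 0).continuousAt.continuousWithinAt (fun r _ => hGd r) hGint
      (hGs.is_zero_at_infty.mono_left atTop_le_cocompact)
    rw [this]; simp [hG]
  rw [h2, ← integral_const_mul, ← integral_const_mul, ← integral_const_mul,
    ← integral_sub, ← integral_add, ← integral_sub, ← sub_eq_zero, ← integral_sub, ← neg_eq_zero,
    ← integral_neg]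
  · refine Eq.trans (setIntegral_congr_fun measurableSet_Ioi fun r _ => ?_) hG0
    simp only [hG', pow_succ]
    ring
  all_goals exact hInt (by fun_prop) fun r hr => by simp [hz r hr, hz' r hr]

lemma pow_mul_exp_groundState_sq (m : ℕ) {r : ℝ} (hr : 0 < r) :
    r ^ m * rexp (-(((m : ℝ) + 1) / 2) * log r - r ^ 2 / 8) ^ 2 = r⁻¹ * rexp (-(r ^ 2 / 4)) := by
  have h1 : r ^ m = rexp (m * log r) := by rw [Real.exp_nat_mul, Real.exp_log hr]
  have h2 : r⁻¹ = rexp (-log r) := by rw [Real.exp_neg, Real.exp_log hr]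
  rw [h1, h2, ← Real.exp_nat_mul, ← Real.exp_add, ← Real.exp_add]
  congr 1
  push_cast
  ring

lemma exists_radial_profile (m : ℕ) {δ : ℝ} (hδ : 0 < δ) :
    ∃ (g : ℝ → ℝ) (ρ : ℝ), 0 < ρ ∧ ContDiff ℝ (⊤ : ℕ∞) g ∧ HasCompactSupport g ∧
      (∀ r < ρ, g r = 0) ∧ 0 < (∫ r in Set.Ioi (0 : ℝ), r ^ (m + 2) * g r ^ 2) ∧
      (∫ r in Set.Ioi (0 : ℝ),
        r ^ m * (r * deriv g r + (((m : ℝ) + 1) / 2 + r ^ 2 / 4) * g r) ^ 2) ≤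
        δ * ∫ r in Set.Ioi (0 : ℝ), r ^ (m + 2) * g r ^ 2 := by
  obtain ⟨η, hηs, hηc, hη0, hη1⟩ : ∃ η : ℝ → ℝ, ContDiff ℝ (⊤ : ℕ∞) η ∧ HasCompactSupport η ∧
      (∀ t, 2 ≤ |t| → η t = 0) ∧ ∀ t, |t| ≤ 1 → η t = 1 := by
    let η : ContDiffBump (0 : ℝ) := ⟨1, 2, one_pos, one_lt_two⟩
    exact ⟨η, η.contDiff, η.hasCompactSupport, fun t ht => η.zero_of_le_dist (by simpa using ht),
      fun t ht => η.one_of_mem_closedBall (by simpa using ht)⟩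
  have hη0' : ∀ t, 2 < |t| → deriv η t = 0 := fun t ht => by
    have : η =ᶠ[nhds t] fun _ => 0 := by
      filter_upwards [continuous_abs.continuousAt.eventually (lt_mem_nhds ht)] with x hx
      exact hη0 x hx.le
    rw [this.deriv_eq, deriv_const]
  obtain ⟨M, hM⟩ := (hηs.continuous_deriv (by simp)).bounded_above_of_compact_support
    hηc.deriv
  obtain ⟨N, hN1, hN⟩ : ∃ N : ℝ, 1 ≤ N ∧ 4 * M ^ 2 / N ≤ δ * rexp (-1) := by
    have hpos : 0 < δ * rexp (-1) := by positivity
    refine ⟨max 1 (4 * M ^ 2 / (δ * rexp (-1))), le_max_left _ _, ?_⟩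
    rw [div_le_iff₀ (by positivity), ← div_le_iff₀' hpos]
    exact le_max_right _ _
  have hN0 : 0 < N := by linarith
  set W : ℝ → ℝ := fun r => rexp (-(((m : ℝ) + 1) / 2) * log r - r ^ 2 / 8) with hW
  set g : ℝ → ℝ := fun r => if 0 < r then W r * η (log r / N) else 0 with hg
  have hgpos : ∀ r, 0 < r → g r = W r * η (log r / N) := fun r hr => if_pos hr
  have hglow : ∀ r < rexp (-2 * N), g r = 0 := fun r hr => by
    rcases le_or_gt r 0 with h | h
    · exact if_neg h.not_gt
    · rw [hgpos r h, hη0, mul_zero]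
      have := (Real.log_lt_iff_lt_exp h).2 hr
      rw [le_abs']; left
      rw [div_le_iff₀ hN0]; linarith
  have hghigh : ∀ r, rexp (2 * N) < r → g r = 0 := fun r hr => by
    have h : 0 < r := (Real.exp_pos _).trans hr
    rw [hgpos r h, hη0, mul_zero]
    have := (Real.lt_log_iff_exp_lt h).2 hr
    rw [le_abs']; right
    rw [le_div_iff₀ hN0]; linarith
  have hgeq : ∀ r, 0 < r → g =ᶠ[nhds r] fun r => W r * η (log r / N) := fun r hr => by
    filter_upwards [lt_mem_nhds hr] with x hx using hgpos x hx
  have hgs : ContDiff ℝ (⊤ : ℕ∞) g := contDiff_iff_contDiffAt.2 fun r => by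
    rcases lt_or_ge r (rexp (-2 * N)) with h | h
    · refine (contDiffAt_const (c := (0 : ℝ))).congr_of_eventuallyEq ?_
      filter_upwards [gt_mem_nhds h] with x hx using hglow x hx
    · have hr : 0 < r := (Real.exp_pos _).trans_le h
      have hl : ContDiffAt ℝ (⊤ : ℕ∞) log r := Real.contDiffAt_log.2 hr.ne'
      refine ContDiffAt.congr_of_eventuallyEq ?_ (hgeq r hr)
      refine ContDiffAt.mul ?_ (hηs.contDiffAt.comp r (hl.div_const N))
      exact (((contDiffAt_const.mul hl).sub ((contDiffAt_id.pow 2).div_const 8))).exp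
  have hgc : HasCompactSupport g := HasCompactSupport.intro
    (isCompact_Icc (a := rexp (-2 * N)) (b := rexp (2 * N))) fun r hr => by
      rw [Set.mem_Icc, not_and_or, not_le, not_le] at hr
      exact hr.elim (hglow r) (hghigh r)
  have hgd : ∀ r, 0 < r → r * deriv g r + (((m : ℝ) + 1) / 2 + r ^ 2 / 4) * g r =
      W r * deriv η (log r / N) / N := fun r hr => by
    have hl := Real.hasDerivAt_log hr.ne'
    have hWd : HasDerivAt W (W r * (-(((m : ℝ) + 1) / 2) * r⁻¹ - r / 4)) r := by
      refine (((hl.const_mul _).sub ((hasDerivAt_pow 2 r).div_const 8)).exp).congr_deriv ?_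
      simp only [hW]; norm_num; ring
    have hηd : HasDerivAt (fun r => η (log r / N)) (deriv η (log r / N) * (r⁻¹ / N)) r :=
      HasDerivAt.comp r ((hηs.differentiable (by simp)) _).hasDerivAt (hl.div_const N)
    rw [(hgeq r hr).deriv_eq, (hWd.fun_mul hηd).deriv, hgpos r hr]
    field_simp
    ring
  have hInt : IntegrableOn (fun r => r ^ (m + 2) * g r ^ 2) (Set.Ioi 0) := by
    refine (Continuous.integrable_of_hasCompactSupport ?_ ?_).integrableOn
    · have := hgs.continuous; fun_prop
    · exact HasCompactSupport.intro hgc fun r hr => by simp [image_eq_zero_of_notMem_tsupport hr]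
  have hlow : rexp (-1) ≤ ∫ r in Set.Ioi (0 : ℝ), r ^ (m + 2) * g r ^ 2 := by
    calc rexp (-1) = ∫ r in Set.Icc (1 : ℝ) 2, rexp (-1) := by simp; norm_num
      _ ≤ ∫ r in Set.Icc (1 : ℝ) 2, r ^ (m + 2) * g r ^ 2 := by
        refine setIntegral_mono_on (by simp) (hInt.mono_set fun r hr => ?_) measurableSet_Icc
          fun r hr => ?_
        · exact one_pos.trans_le hr.1
        · have hr0 : 0 < r := one_pos.trans_le hr.1
          have hlog : |log r / N| ≤ 1 := by
            have h1 := Real.log_nonneg hr.1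
            have h2 := Real.log_le_sub_one_of_pos hr0
            rw [abs_of_nonneg (by positivity), div_le_one hN0]
            linarith [hr.2]
          have := pow_mul_exp_groundState_sq m hr0
          rw [hgpos r hr0, hη1 _ hlog, mul_one, pow_add, mul_right_comm, this]
          have h4 : rexp (-1) ≤ rexp (-(r ^ 2 / 4)) := by
            apply Real.exp_le_exp.2
            nlinarith [hr.1, hr.2]
          have : r⁻¹ * rexp (-(r ^ 2 / 4)) * r ^ 2 = r * rexp (-(r ^ 2 / 4)) := by
            field_simp
          rw [this]
          nlinarith [hr.1, Real.exp_pos (-(r ^ 2 / 4))]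
      _ ≤ _ := by
        refine setIntegral_mono_set hInt ?_ (Eventually.of_forall fun r hr => ?_)
        · refine (ae_restrict_iff' measurableSet_Ioi).2 (Eventually.of_forall fun r hr => ?_)
          have : 0 < r := hr
          simp only [Pi.zero_apply]
          positivity
        · exact one_pos.trans_le hr.1
  refine ⟨g, rexp (-2 * N), Real.exp_pos _, hgs, hgc, hglow, (Real.exp_pos _).trans_le hlow, ?_⟩
  refine le_trans ?_ (mul_le_mul_of_nonneg_left hlow hδ.le)
  refine le_trans ?_ hN
  have hexp : rexp (-2 * N) ≤ rexp (2 * N) := Real.exp_le_exp.2 (by linarith)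
  have hcinv : ContinuousOn (fun r : ℝ => (M / N) ^ 2 * r⁻¹)
      (Set.Icc (rexp (-2 * N)) (rexp (2 * N))) :=
    continuousOn_const.mul (continuousOn_id.inv₀ fun r hr => ((Real.exp_pos _).trans_le hr.1).ne')
  rw [setIntegral_eq_of_subset_of_forall_sdiff_eq_zero (s := Set.Icc (rexp (-2 * N)) (rexp (2 * N)))
    measurableSet_Ioi (fun r hr => (Real.exp_pos _).trans_le hr.1)]
  · calc _ ≤ ∫ r in Set.Icc (rexp (-2 * N)) (rexp (2 * N)), (M / N) ^ 2 * r⁻¹ := by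
          refine setIntegral_mono_on ?_ (hcinv.integrableOn_compact isCompact_Icc)
            measurableSet_Icc fun r hr => ?_
          · refine (Continuous.continuousOn ?_).integrableOn_compact isCompact_Icc
            have h1 := hgs.continuous
            have h2 := hgs.continuous_deriv (by simp)
            fun_prop
          · have hr0 : 0 < r := (Real.exp_pos _).trans_le hr.1
            have hsq : deriv η (log r / N) ^ 2 ≤ M ^ 2 := sq_le_sq' (by
              linarith [neg_abs_le (deriv η (log r / N)), hM (log r / N),
                Real.norm_eq_abs (deriv η (log r / N))])
              ((le_abs_self _).trans (hM _))
            rw [hgd r hr0, div_pow, mul_pow, ← mul_div_assoc, ← mul_assoc,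
              pow_mul_exp_groundState_sq m hr0, div_pow, div_mul_eq_mul_div]
            refine div_le_div_of_nonneg_right ?_ (by positivity)
            have h5 : rexp (-(r ^ 2 / 4)) ≤ 1 := Real.exp_le_one_iff.2 (by nlinarith)
            calc r⁻¹ * rexp (-(r ^ 2 / 4)) * deriv η (log r / N) ^ 2 ≤ r⁻¹ * 1 * M ^ 2 := by
                  gcongr
              _ = M ^ 2 * r⁻¹ := by ring
      _ = 4 * M ^ 2 / N := by
          rw [integral_Icc_eq_integral_Ioc, ← intervalIntegral.integral_of_le hexp,
            intervalIntegral.integral_const_mul, integral_inv_of_pos (Real.exp_pos _)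
              (Real.exp_pos _), ← Real.exp_sub, Real.log_exp]
          field_simp
          ring
  · rintro r ⟨hr0, hr⟩
    have hr0 : 0 < r := hr0
    rw [hgd r hr0, hη0']
    · simp
    · rw [Set.mem_Icc, not_and_or, not_le, not_le] at hr
      rw [lt_abs]
      rcases hr with hr | hr
      · right
        have := (Real.log_lt_iff_lt_exp hr0).2 hr
        rw [← neg_div, lt_div_iff₀ hN0]; linarith
      · left
        have := (Real.lt_log_iff_exp_lt hr0).2 hr
        rw [lt_div_iff₀ hN0]; linarith

lemma integral_radial_eq {m : ℕ} (f : ℝ → ℝ) :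
    ∫ y : EuclideanSpace ℝ (Fin (m + 3)), f ‖y‖ =
      ((m + 3 : ℕ) * volume.real (Metric.ball (0 : EuclideanSpace ℝ (Fin (m + 3))) 1)) *
        ∫ r in Set.Ioi (0 : ℝ), r ^ (m + 2) * f r := by
  have h := integral_fun_norm_addHaar (volume : Measure (EuclideanSpace ℝ (Fin (m + 3)))) f
  simp only [finrank_euclideanSpace, Fintype.card_fin, nsmul_eq_mul, smul_eq_mul] at h
  rw [h, mul_assoc]
  simp

lemma hasFDerivAt_radial {d : ℕ} {g : ℝ → ℝ} {y : EuclideanSpace ℝ (Fin d)} (hy : y ≠ 0)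
    (hg : DifferentiableAt ℝ g ‖y‖) :
    HasFDerivAt (fun y : EuclideanSpace ℝ (Fin d) => g ‖y‖)
      ((deriv g ‖y‖ * ‖y‖⁻¹) • innerSL ℝ y) y := by
  have hy' := norm_ne_zero_iff.2 hy
  have hn := (hasStrictFDerivAt_norm_sq y).hasFDerivAt.sqrt (pow_ne_zero 2 hy')
  simp only [Real.sqrt_sq (norm_nonneg _)] at hn
  refine (hg.hasDerivAt.comp_hasFDerivAt y hn).congr_fderiv ?_
  ext v
  simp only [smul_apply, nsmul_eq_mul, smul_eq_mul, Nat.cast_ofNat]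
  field_simp

lemma contDiff_radial {d : ℕ} {g : ℝ → ℝ} {ρ : ℝ} (hρ : 0 < ρ) (hg : ContDiff ℝ (⊤ : ℕ∞) g)
    (h0 : ∀ r < ρ, g r = 0) :
    ContDiff ℝ (⊤ : ℕ∞) fun y : EuclideanSpace ℝ (Fin d) => g ‖y‖ :=
  contDiff_iff_contDiffAt.2 fun y => by
    by_cases hy : y = 0
    · refine (contDiffAt_const (c := (0 : ℝ))).congr_of_eventuallyEq ?_
      have : ‖y‖ < ρ := by simpa [hy] using hρ
      filter_upwards [continuous_norm.continuousAt.eventually (gt_mem_nhds this)] with x hx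
      exact h0 _ hx
    · exact hg.contDiffAt.comp y (contDiffAt_norm ℝ hy)

lemma sum_fderiv_radial_sq {d : ℕ} {g : ℝ → ℝ} {ρ : ℝ} (hρ : 0 < ρ) (hg : ContDiff ℝ (⊤ : ℕ∞) g)
    (h0 : ∀ r < ρ, g r = 0) (y : EuclideanSpace ℝ (Fin d)) :
    ∑ j, (fderiv ℝ (fun y : EuclideanSpace ℝ (Fin d) => g ‖y‖) y
      (EuclideanSpace.single j (1 : ℝ))) ^ 2 = deriv g ‖y‖ ^ 2 := by
  by_cases hy : ‖y‖ < ρ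
  · have e1 : (fun y : EuclideanSpace ℝ (Fin d) => g ‖y‖) =ᶠ[nhds y] fun _ => 0 := by
      filter_upwards [continuous_norm.continuousAt.eventually (gt_mem_nhds hy)] with x hx
      exact h0 _ hx
    have e2 : g =ᶠ[nhds ‖y‖] fun _ => 0 := by
      filter_upwards [gt_mem_nhds hy] with x hx using h0 _ hx
    rw [e1.fderiv_eq, e2.deriv_eq]
    simp
  · have hy0 : y ≠ 0 := by rintro rfl; simp [hρ] at hy
    rw [(hasFDerivAt_radial hy0 (hg.differentiable (by simp) _)).fderiv]
    have : ∀ j, ((deriv g ‖y‖ * ‖y‖⁻¹) • innerSL ℝ y) (EuclideanSpace.single j (1 : ℝ)) =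
        deriv g ‖y‖ * ‖y‖⁻¹ * y j := fun j => by
      simp [EuclideanSpace.inner_single_right]
    simp only [this, mul_pow]
    rw [← Finset.mul_sum, ← EuclideanSpace.real_norm_sq_eq]
    have := norm_ne_zero_iff.2 hy0
    field_simp

/-- Real radial trial functions supported away from the origin whose nonmagnetic Rayleigh quotient
is arbitrarily close to `1/2`. -/
lemma exists_radial_trial {d : ℕ} (hd : 3 ≤ d) {δ : ℝ} (hδ : 0 < δ) :
    ∃ (φ : EuclideanSpace ℝ (Fin d) → ℝ) (ρ : ℝ), 0 < ρ ∧ ContDiff ℝ (⊤ : ℕ∞) φ ∧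
      HasCompactSupport φ ∧ (∀ y, ‖y‖ < ρ → φ y = 0) ∧ 0 < (∫ y, φ y ^ 2) ∧
      (∫ y, ∑ j, (fderiv ℝ φ y (EuclideanSpace.single j (1 : ℝ))) ^ 2) -
        ((d - 2 : ℝ) / 2) ^ 2 * (∫ y, φ y ^ 2 / ‖y‖ ^ 2) +
        (1 / 16 : ℝ) * (∫ y, ‖y‖ ^ 2 * φ y ^ 2) ≤ (1 / 2 + δ) * ∫ y, φ y ^ 2 := by
  obtain ⟨m, rfl⟩ : ∃ m, d = m + 3 := ⟨d - 3, by omega⟩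
  obtain ⟨g, ρ, hρ, hg, hgc, h0, hpos, hle⟩ := exists_radial_profile m hδ
  have hC : 0 < ((m + 3 : ℕ) : ℝ) *
      volume.real (Metric.ball (0 : EuclideanSpace ℝ (Fin (m + 3))) 1) :=
    mul_pos (by positivity) (ENNReal.toReal_pos
      (Metric.measure_ball_pos _ _ one_pos).ne' measure_ball_lt_top.ne)
  refine ⟨fun y => g ‖y‖, ρ, hρ, contDiff_radial hρ hg h0, ?_, fun y hy => h0 _ hy, ?_, ?_⟩
  · obtain ⟨R, hR⟩ := exists_forall_lt_norm_eq_zero (fun _ : Unit => hgc)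
    refine HasCompactSupport.intro (isCompact_closedBall 0 R) fun y hy => ?_
    refine hR.2 () _ ?_
    simpa using hy
  · rw [integral_radial_eq fun r => g r ^ 2]
    positivity
  · simp only [sum_fderiv_radial_sq hρ hg h0]
    rw [integral_radial_eq fun r => g r ^ 2, integral_radial_eq fun r => deriv g r ^ 2,
      integral_radial_eq fun r => g r ^ 2 / r ^ 2, integral_radial_eq fun r => r ^ 2 * g r ^ 2]
    have hid := radial_groundState_identity m (hg.of_le (by simp)) hgc
    rw [← hid] at hle
    have := mul_le_mul_of_nonneg_left hle hC.le
    push_cast at this ⊢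
    have e : ((m : ℝ) + 3 - 2) / 2 = ((m : ℝ) + 1) / 2 := by ring
    rw [e]
    linarith

end RadialTestFunctions

section GaugedTrialFunctions

variable {d : ℕ}

lemma contDiffAt_gauge_mul {c : ℝ} {χ φ : EuclideanSpace ℝ (Fin d) → ℝ}
    {y : EuclideanSpace ℝ (Fin d)} (hχ : ContDiffAt ℝ (⊤ : ℕ∞) χ (c • y))
    (hφ : ContDiffAt ℝ (⊤ : ℕ∞) φ y) :
    ContDiffAt ℝ (⊤ : ℕ∞) (fun y => Complex.exp (Complex.I * (χ (c • y) : ℝ)) * (φ y : ℂ)) y := by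
  have h1 : ContDiffAt ℝ (⊤ : ℕ∞) (fun y => χ (c • y)) y :=
    hχ.comp y (contDiffAt_id.const_smul c)
  have hof : ContDiff ℝ (⊤ : ℕ∞) ((↑) : ℝ → ℂ) := Complex.ofRealCLM.contDiff
  exact (contDiffAt_const.mul (hof.contDiffAt.comp y h1)).cexp.mul (hof.contDiffAt.comp y hφ)

lemma fderiv_gauge_mul_apply {c : ℝ} {χ φ : EuclideanSpace ℝ (Fin d) → ℝ}
    {y : EuclideanSpace ℝ (Fin d)} (hχ : DifferentiableAt ℝ χ (c • y))
    (hφ : DifferentiableAt ℝ φ y) (v : EuclideanSpace ℝ (Fin d)) :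
    fderiv ℝ (fun y => Complex.exp (Complex.I * (χ (c • y) : ℝ)) * (φ y : ℂ)) y v =
      Complex.exp (Complex.I * (χ (c • y) : ℝ)) *
        ((fderiv ℝ φ y v : ℝ) + Complex.I * (c * fderiv ℝ χ (c • y) v : ℝ) * φ y) := by
  have h1 : HasFDerivAt (fun y => χ (c • y)) (c • fderiv ℝ χ (c • y)) y := by
    refine (hχ.hasFDerivAt.comp y ((hasFDerivAt_id y).const_smul c)).congr_fderiv ?_
    ext v
    simp
  have h2 := ((Complex.ofRealCLM.hasFDerivAt.comp y h1).const_mul Complex.I).cexp.mul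
    (Complex.ofRealCLM.hasFDerivAt.comp y hφ.hasFDerivAt)
  refine (congrArg (fun L => L v) h2.fderiv).trans ?_
  simp
  ring

lemma lsFormP_gauge_mul {A : EuclideanSpace ℝ (Fin d) → Fin d → ℝ}
    {χ φ : EuclideanSpace ℝ (Fin d) → ℝ} {R ρ s : ℝ}
    (hχ : ∀ x, R < ‖x‖ → ContDiffAt ℝ (⊤ : ℕ∞) χ x ∧
      ∀ j, fderiv ℝ χ x (EuclideanSpace.single j 1) = A x j)
    (hφ : ContDiff ℝ (⊤ : ℕ∞) φ) (h0 : ∀ y, ‖y‖ < ρ → φ y = 0) (hs : R < rexp (s / 2) * ρ) :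
    ContDiff ℝ (⊤ : ℕ∞)
      (fun y => Complex.exp (Complex.I * (χ (rexp (s / 2) • y) : ℝ)) * (φ y : ℂ)) ∧
    lsFormP d A s (fun y => Complex.exp (Complex.I * (χ (rexp (s / 2) • y) : ℝ)) * (φ y : ℂ)) =
      (∫ y, ∑ j, (fderiv ℝ φ y (EuclideanSpace.single j (1 : ℝ))) ^ 2) -
        ((d - 2 : ℝ) / 2) ^ 2 * (∫ y, φ y ^ 2 / ‖y‖ ^ 2) +
        (1 / 16 : ℝ) * (∫ y, ‖y‖ ^ 2 * φ y ^ 2) := by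
  have hfar : ∀ y : EuclideanSpace ℝ (Fin d), ρ ≤ ‖y‖ → R < ‖rexp (s / 2) • y‖ := fun y hy => by
    rw [norm_smul, Real.norm_eq_abs, Real.abs_exp]
    exact hs.trans_le (mul_le_mul_of_nonneg_left hy (Real.exp_pos _).le)
  have hnear : ∀ y, ‖y‖ < ρ → φ =ᶠ[nhds y] fun _ => 0 := fun y hy => by
    filter_upwards [continuous_norm.continuousAt.eventually (gt_mem_nhds hy)] with x hx
    exact h0 _ hx
  have hnear' : ∀ y, ‖y‖ < ρ →
      (fun y => Complex.exp (Complex.I * (χ (rexp (s / 2) • y) : ℝ)) * (φ y : ℂ)) =ᶠ[nhds y]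
        fun _ => 0 := fun y hy => by
    filter_upwards [hnear y hy] with x hx
    simp [hx]
  have hnorm : ∀ t : ℝ, ‖Complex.exp (Complex.I * t)‖ = 1 := fun t => by
    rw [mul_comm, Complex.norm_exp_ofReal_mul_I]
  constructor
  · refine contDiff_iff_contDiffAt.2 fun y => ?_
    rcases lt_or_ge ‖y‖ ρ with hy | hy
    · exact contDiffAt_const.congr_of_eventuallyEq (hnear' y hy)
    · exact contDiffAt_gauge_mul (hχ _ (hfar y hy)).1 hφ.contDiffAt
  · have hgrad : ∀ y j, ‖fderiv ℝ
        (fun y => Complex.exp (Complex.I * (χ (rexp (s / 2) • y) : ℝ)) * (φ y : ℂ)) y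
          (EuclideanSpace.single j (1 : ℝ)) -
        Complex.I * (rexp (s / 2) * A (rexp (s / 2) • y) j : ℝ) *
          (Complex.exp (Complex.I * (χ (rexp (s / 2) • y) : ℝ)) * (φ y : ℂ))‖ ^ 2 =
        (fderiv ℝ φ y (EuclideanSpace.single j (1 : ℝ))) ^ 2 := fun y j => by
      rcases lt_or_ge ‖y‖ ρ with hy | hy
      · rw [(hnear' y hy).fderiv_eq, (hnear y hy).fderiv_eq, h0 y hy]
        simp
      · obtain ⟨h1, h2⟩ := hχ _ (hfar y hy)
        rw [fderiv_gauge_mul_apply (h1.differentiableAt (by simp))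
          (hφ.differentiable (by simp) y), h2]
        have : ∀ u p q r : ℂ, u * (p + q * r) - q * (u * r) = u * p := fun u p q r => by ring
        rw [this, norm_mul, hnorm, one_mul, Complex.norm_real, Real.norm_eq_abs, sq_abs]
    simp only [lsFormP, hgrad, norm_mul, hnorm, one_mul, Complex.norm_real, Real.norm_eq_abs,
      sq_abs]

end GaugedTrialFunctions

lemma integral_norm_sq_pos {d : ℕ} {ψ : EuclideanSpace ℝ (Fin d) → ℂ} (hψ : Continuous ψ)
    (hc : HasCompactSupport ψ) (h0 : ψ ≠ 0) : 0 < ∫ y, ‖ψ y‖ ^ 2 := by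
  obtain ⟨x, hx⟩ := Function.ne_iff.1 h0
  have hc2 : HasCompactSupport fun y => ‖ψ y‖ ^ 2 := HasCompactSupport.intro hc fun y hy => by
    simp [image_eq_zero_of_notMem_tsupport hy]
  exact (hψ.norm.pow 2).integral_pos_of_hasCompactSupport_nonneg_nonzero hc2
    (fun y => by positivity) (x := x) (by simpa using hx)

theorem stmt18 (d : ℕ) (hd : 3 ≤ d)
    (B : EuclideanSpace ℝ (Fin d) → Fin d → Fin d → ℝ)
    (hBsmooth : ∀ j k, ContDiff ℝ (⊤ : ℕ∞) fun x => B x j k)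
    (hBsupp : ∀ j k, HasCompactSupport fun x => B x j k)
    (hBskew : ∀ x j k, B x k j = - B x j k)
    (hBclosed : ∀ (x : EuclideanSpace ℝ (Fin d)) (j k l : Fin d),
      fderiv ℝ (fun y => B y k l) x (EuclideanSpace.single j (1:ℝ))
      + fderiv ℝ (fun y => B y l j) x (EuclideanSpace.single k (1:ℝ))
      + fderiv ℝ (fun y => B y j k) x (EuclideanSpace.single l (1:ℝ)) = 0) :
    Tendsto (fun s => lambdaB d (poincareGauge d B) s) atTop (nhds (1/2 : ℝ)) := by
  have hlow : ∀ s, ∀ q ∈ {q : ℝ | ∃ ψ : EuclideanSpace ℝ (Fin d) → ℂ,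
      ContDiff ℝ (⊤ : ℕ∞) ψ ∧ HasCompactSupport ψ ∧ ψ ≠ 0 ∧
      q = lsFormP d (poincareGauge d B) s ψ / ∫ y, ‖ψ y‖ ^ 2}, 1 / 2 ≤ q := by
    rintro s q ⟨ψ, hψ, hc, h0, rfl⟩
    rw [le_div_iff₀ (integral_norm_sq_pos hψ.continuous hc h0)]
    refine half_mul_integral_le_form hd (fun j => ?_) hψ hc
    exact continuous_const.mul
      ((contDiff_poincareGauge hBsmooth j).continuous.comp (continuous_const_smul _))
  obtain ⟨R, χ, hR, hχ⟩ := exists_fderiv_eq_poincareGauge hd hBsmooth hBsupp hBskew hBclosed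
  rw [Metric.tendsto_atTop]
  intro ε hε
  obtain ⟨φ, ρ, hρ, hφ, hφc, hφ0, hpos, hle⟩ := exists_radial_trial hd (half_pos hε)
  refine ⟨2 * (R / ρ), fun s hs => ?_⟩
  have hsR : R < rexp (s / 2) * ρ := by
    rw [← div_lt_iff₀ hρ]
    linarith [Real.add_one_le_exp (s / 2)]
  obtain ⟨hψ, hform⟩ := lsFormP_gauge_mul hχ hφ hφ0 hsR
  set ψ : EuclideanSpace ℝ (Fin d) → ℂ :=
    fun y => Complex.exp (Complex.I * (χ (rexp (s / 2) • y) : ℝ)) * (φ y : ℂ) with hψdef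
  have hψn : ∀ y, ‖ψ y‖ ^ 2 = φ y ^ 2 := fun y => by
    rw [hψdef, norm_mul, mul_comm Complex.I, Complex.norm_exp_ofReal_mul_I, one_mul,
      Complex.norm_real, Real.norm_eq_abs, sq_abs]
  have hmem : lsFormP d (poincareGauge d B) s ψ / (∫ y, ‖ψ y‖ ^ 2) ∈
      {q : ℝ | ∃ ψ : EuclideanSpace ℝ (Fin d) → ℂ,
        ContDiff ℝ (⊤ : ℕ∞) ψ ∧ HasCompactSupport ψ ∧ ψ ≠ 0 ∧
        q = lsFormP d (poincareGauge d B) s ψ / ∫ y, ‖ψ y‖ ^ 2} := by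
    refine ⟨ψ, hψ, ?_, ?_, rfl⟩
    · exact HasCompactSupport.intro hφc fun y hy => by
        simp [hψdef, image_eq_zero_of_notMem_tsupport hy]
    · intro h
      refine hpos.ne' ?_
      simp [← hψn, h]
  have hlower : 1 / 2 ≤ lambdaB d (poincareGauge d B) s := le_csInf ⟨_, hmem⟩ (hlow s)
  have hupper : lambdaB d (poincareGauge d B) s ≤ 1 / 2 + ε / 2 := by
    refine (csInf_le ⟨1 / 2, hlow s⟩ hmem).trans ?_
    simp only [hψn]
    rwa [hform, div_le_iff₀ hpos]
  rw [Real.dist_eq, abs_of_nonneg (by linarith)]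
  linarith
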